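/- Let P be an antisymmetric r×r integer matrix. Then there exists an integer matrix X with det X = ±1 such that X^T P X is block diagonal of the form diag( [[0,h_1],[−h_1,0]], …, [[0,h_k],[−h_k,0]], 0, …, 0 ) where h_1,…,h_k are nonzero integers with h_i dividing h_{i+1} for 1 ≤ i ≤ k−1. -/

import Mathlib

/-- The block-diagonal `r × r` integer matrix
`diag([[0,h₁],[−h₁,0]], …, [[0,h_k],[−h_k,0]], 0, …, 0)`. -/
def skewBlockDiag (r k : ℕ) (h : Fin k → ℤ) : Matrix (Fin r) (Fin r) ℤ :=
  Matrix.of fun i j =>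
    if hp : i.val / 2 < k ∧ i.val / 2 = j.val / 2 then
      if i.val % 2 = 0 ∧ j.val % 2 = 1 then h ⟨i.val / 2, hp.1⟩
      else if i.val % 2 = 1 ∧ j.val % 2 = 0 then -h ⟨i.val / 2, hp.1⟩
      else 0
    else 0

/-!
Among the principal ideals generated by the values of an alternating form `B` on a finite free
module over a principal ideal domain, choose a maximal one, `(B x y)`. By Bézout, `B x y` then
divides every value of `B`. Hence subtracting suitable multiples of `x` and `y` projects any vector
to the orthogonal complement of `x` and `y`, so that a basis of this complement together with `x`
and `y` is a basis of the module. Recursing into the complement yields the blocks one by one; every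
later block is a value of `B`, so it is divisible by `B x y`.
-/

/-- The block-diagonal matrix `diag([[0,h₁],[−h₁,0]], …, [[0,h_k],[−h_k,0]], 0, …, 0)` over an
arbitrary ring, the normal form of an alternating form. It is encoded as in `skewBlockDiag`, so that
both agree definitionally over `ℤ`; blocks that do not fit into `r` rows are cut off. -/
def alternatingBlockDiag {R : Type*} [Zero R] [Neg R] (r k : ℕ) (h : Fin k → R) :
    Matrix (Fin r) (Fin r) R :=
  Matrix.of fun i j =>
    if hp : i.val / 2 < k ∧ i.val / 2 = j.val / 2 then
      if i.val % 2 = 0 ∧ j.val % 2 = 1 then h ⟨i.val / 2, hp.1⟩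
      else if i.val % 2 = 1 ∧ j.val % 2 = 0 then -h ⟨i.val / 2, hp.1⟩
      else 0
    else 0

namespace alternatingBlockDiag

variable {R : Type*} [Zero R] [Neg R] {m k : ℕ}

theorem zero_blocks (r : ℕ) (h : Fin 0 → R) : alternatingBlockDiag r 0 h = 0 := by
  ext i j
  simp [alternatingBlockDiag]

theorem apply_two_mul (h : Fin k → R) (i : Fin k) (hi : 2 * (i : ℕ) + 1 < m) :
    alternatingBlockDiag m k h ⟨2 * i, by omega⟩ ⟨2 * i + 1, hi⟩ = h i := by
  have hdiv : (2 * (i : ℕ) + 1) / 2 = i := by omega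
  simp [alternatingBlockDiag, hdiv]

theorem apply_self (h : Fin k → R) (i : Fin m) : alternatingBlockDiag m k h i i = 0 := by
  simp only [alternatingBlockDiag, Matrix.of_apply]
  grind

variable (d : R) (h : Fin k → R)

theorem cons_zero_one : alternatingBlockDiag (m + 2) (k + 1) (Fin.cons d h) 0 1 = d := by
  simp [alternatingBlockDiag]

theorem cons_one_zero : alternatingBlockDiag (m + 2) (k + 1) (Fin.cons d h) 1 0 = -d := by
  simp [alternatingBlockDiag]

theorem cons_succ_succ_of_lt_two {i : Fin (m + 2)} (hi : i.val < 2) (j : Fin m) :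
    alternatingBlockDiag (m + 2) (k + 1) (Fin.cons d h) i j.succ.succ = 0 :=
  dif_neg (by rw [Fin.val_succ, Fin.val_succ]; omega)

theorem cons_succ_succ_left_of_lt_two (i : Fin m) {j : Fin (m + 2)} (hj : j.val < 2) :
    alternatingBlockDiag (m + 2) (k + 1) (Fin.cons d h) i.succ.succ j = 0 :=
  dif_neg (by rw [Fin.val_succ, Fin.val_succ]; omega)

theorem cons_succ_succ_succ_succ (i j : Fin m) :
    alternatingBlockDiag (m + 2) (k + 1) (Fin.cons d h) i.succ.succ j.succ.succ =
      alternatingBlockDiag m k h i j := by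
  have hdiv (a : ℕ) : (a + 1 + 1) / 2 = a / 2 + 1 := by omega
  have hmod (a : ℕ) : (a + 1 + 1) % 2 = a % 2 := by omega
  have hcons (a : ℕ) (ha : a + 1 < k + 1) :
      (Fin.cons d h : Fin (k + 1) → R) ⟨a + 1, ha⟩ = h ⟨a, by omega⟩ := rfl
  simp [alternatingBlockDiag, hdiv, hmod, hcons]

end alternatingBlockDiag

theorem fin_cons_dvd_fin_cons_of_le {α : Type*} [Monoid α] {k : ℕ} {d : α} {h : Fin k → α}
    (hd : ∀ i, d ∣ h i) (hchain : ∀ ⦃i j⦄, i ≤ j → h i ∣ h j) ⦃i j : Fin (k + 1)⦄ (hij : i ≤ j) :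
    (Fin.cons d h : Fin (k + 1) → α) i ∣ (Fin.cons d h : Fin (k + 1) → α) j := by
  cases i using Fin.cases with
  | zero => exact Fin.cases dvd_rfl hd j
  | succ i =>
    cases j using Fin.cases with
    | zero => simp at hij
    | succ j => exact hchain (Fin.succ_le_succ_iff.mp hij)

section BilinearMap

variable {R M N : Type*} [CommRing R] [AddCommGroup M] [Module R M] [AddCommGroup N] [Module R N]

theorem apply_dvd_of_forall_dvd_imp [IsBezout R] {B : M →ₗ[R] N →ₗ[R] R} {x : M} {y : N}
    (hmax : ∀ z w, B z w ∣ B x y → B x y ∣ B z w) (z : M) (w : N) : B x y ∣ B z w := by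
  have dvd_of_gcd_eq {a : R} {z : M} {w : N} (h : B z w = IsBezout.gcd (B x y) a) : B x y ∣ a :=
    (hmax z w (h ▸ IsBezout.gcd_dvd_left _ _)).trans (h ▸ IsBezout.gcd_dvd_right _ _)
  have dvd_right (w : N) : B x y ∣ B x w := by
    obtain ⟨u, v, huv⟩ := IsBezout.gcd_eq_sum (B x y) (B x w)
    exact dvd_of_gcd_eq (z := x) (w := u • y + v • w) (by simp [← huv])
  have dvd_left (z : M) : B x y ∣ B z y := by
    obtain ⟨u, v, huv⟩ := IsBezout.gcd_eq_sum (B x y) (B z y)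
    exact dvd_of_gcd_eq (z := u • x + v • z) (w := y) (by simp [← huv])
  obtain ⟨a, ha⟩ := dvd_left z
  obtain ⟨b, hb⟩ := dvd_right w
  let z' := z - a • x
  let w' := w - b • y
  have hz' : B z' y = 0 := by simp [z', ha, mul_comm]
  have hw' : B x w' = 0 := by simp [w', hb, mul_comm]
  have dvd_residual : B x y ∣ B z' w' := by
    obtain ⟨u, v, huv⟩ := IsBezout.gcd_eq_sum (B x y) (B z' w')
    exact dvd_of_gcd_eq (z := x + z') (w := u • y + v • w') (by simp [hz', hw', ← huv])
  have residual_eq : B z' w' = B z w - a * B x w := by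
    calc B z' w' = B z' w := by simp [w', hz']
      _ = B z w - a * B x w := by simp [z']
  exact (dvd_sub_left ((dvd_right w).mul_left a)).mp (residual_eq ▸ dvd_residual)

theorem exists_forall_apply_dvd [IsPrincipalIdealRing R] (B : M →ₗ[R] N →ₗ[R] R) :
    ∃ x y, ∀ z w, B x y ∣ B z w := by
  obtain ⟨⟨x, y⟩, -, hmax⟩ := exists_maximalFor_of_wellFoundedGT (fun _ : M × N => True)
    (fun p => Ideal.span {B p.1 p.2}) ⟨0, trivial⟩
  refine ⟨x, y, apply_dvd_of_forall_dvd_imp fun z w hdvd => ?_⟩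
  exact Ideal.span_singleton_le_span_singleton.mp <|
    hmax (j := (z, w)) trivial (Ideal.span_singleton_le_span_singleton.mpr hdvd)

end BilinearMap

section AlternatingForm

variable {R M : Type*} [CommRing R] [AddCommGroup M] [Module R M] {B : LinearMap.BilinForm R M}

open alternatingBlockDiag in
theorem apply_eq_alternatingBlockDiag_cons {m k : ℕ} (hB : B.IsAlt) {v : Fin (m + 2) → M}
    {h : Fin k → R} (h₀ : ∀ i : Fin m, B (v 0) (v i.succ.succ) = 0)
    (h₁ : ∀ i : Fin m, B (v 1) (v i.succ.succ) = 0)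
    (htail : ∀ i j : Fin m, B (v i.succ.succ) (v j.succ.succ) = alternatingBlockDiag m k h i j) :
    ∀ i j, B (v i) (v j) =
      alternatingBlockDiag (m + 2) (k + 1) (Fin.cons (B (v 0) (v 1)) h) i j := by
  have h₀' (i : Fin m) : B (v i.succ.succ) (v 0) = 0 := hB.isRefl.eq_zero (h₀ i)
  have h₁' (i : Fin m) : B (v i.succ.succ) (v 1) = 0 := hB.isRefl.eq_zero (h₁ i)
  simp only [Fin.forall_fin_succ, Fin.succ_zero_eq_one]
  refine ⟨⟨?_, (cons_zero_one _ h).symm, fun j => ?_⟩, ⟨?_, ?_, fun j => ?_⟩,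
    fun i => ⟨?_, ?_, fun j => ?_⟩⟩
  · rw [hB.self_eq_zero, apply_self]
  · rw [h₀, cons_succ_succ_of_lt_two _ _ (by simp)]
  · rw [cons_one_zero, hB.neg_eq]
  · rw [hB.self_eq_zero, apply_self]
  · rw [h₁, cons_succ_succ_of_lt_two _ _ (by simp)]
  · rw [h₀', cons_succ_succ_left_of_lt_two _ _ _ (by simp)]
  · rw [h₁', cons_succ_succ_left_of_lt_two _ _ _ (by simp)]
  · rw [htail, cons_succ_succ_succ_succ]

theorem exists_basis_of_basis_orthogonal [NoZeroDivisors R] (hB : B.IsAlt) {x y : M}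
    (hxy : B x y ≠ 0) (hdvd : ∀ z w, B x y ∣ B z w) {m : ℕ}
    (c : Module.Basis (Fin m) R ↥(LinearMap.ker (B x) ⊓ LinearMap.ker (B y))) :
    ∃ b : Module.Basis (Fin (m + 2)) R M,
      b 0 = x ∧ b 1 = y ∧ ∀ i : Fin m, b i.succ.succ = c i := by
  have hyx : B y x = -B x y := (hB.neg_eq x y).symm
  let c' : Module.Basis (Fin (m + 1)) R ↥(LinearMap.ker (B y)) :=
    Module.Basis.mkFinConsOfLE y (hB y) c inf_le_right
      (fun a u hu hau => by
        have hxu : B x u = 0 := hu.1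
        simpa [hxu, hxy] using congrArg (B x) hau)
      (fun z hz => by
        obtain ⟨q, hq⟩ := hdvd x z
        have hyz : B y z = 0 := hz
        refine ⟨-q, ?_, ?_⟩ <;> simp [hq, hyz, hB.self_eq_zero, mul_comm])
  let b : Module.Basis (Fin (m + 2)) R M := Module.Basis.mkFinCons x c'
    (fun a u hu hau => by
      have hyu : B y u = 0 := hu
      simpa [hyu, hyx, hxy] using congrArg (B y) hau)
    (fun z => by
      obtain ⟨q, hq⟩ := hdvd y z
      exact ⟨q, by simp [hq, hyx, mul_comm]⟩)
  have hb : (b : Fin (m + 2) → M) = Fin.cons x ((↑) ∘ c') := Module.Basis.coe_mkFinCons ..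
  have hc' : (c' : Fin (m + 1) → _) = Fin.cons ⟨y, hB y⟩ (Submodule.inclusion inf_le_right ∘ c) :=
    Module.Basis.coe_mkFinConsOfLE ..
  refine ⟨b, by simp [hb], ?_, fun i => ?_⟩
  · rw [hb, ← Fin.succ_zero_eq_one, Fin.cons_succ, Function.comp_apply, hc', Fin.cons_zero]
  · rw [hb, Fin.cons_succ, Function.comp_apply, hc', Fin.cons_succ, Function.comp_apply,
      Submodule.coe_inclusion]

end AlternatingForm

section PrincipalIdealDomain

variable {R M : Type*} [CommRing R] [IsDomain R] [IsPrincipalIdealRing R]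
  [AddCommGroup M] [Module R M] [Module.Free R M] [Module.Finite R M]

theorem exists_basis_toMatrix_eq_alternatingBlockDiag {n : ℕ} (hn : Module.finrank R M = n)
    {B : LinearMap.BilinForm R M} (hB : B.IsAlt) :
    ∃ (b : Module.Basis (Fin n) R M) (k : ℕ) (h : Fin k → R),
      2 * k ≤ n ∧ (∀ i, h i ≠ 0) ∧ (∀ ⦃i j⦄, i ≤ j → h i ∣ h j) ∧
      LinearMap.BilinForm.toMatrix b B = alternatingBlockDiag n k h := by
  induction n using Nat.strong_induction_on generalizing M with
  | _ n ih =>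
  by_cases hB0 : B = 0
  · exact ⟨Module.finBasisOfFinrankEq R M hn, 0, Fin.elim0, by omega, fun i => i.elim0,
      fun i => i.elim0, by simp [hB0, alternatingBlockDiag.zero_blocks]⟩
  obtain ⟨x, y, hdvd⟩ := exists_forall_apply_dvd B
  have hxy : B x y ≠ 0 := fun hxy =>
    hB0 (LinearMap.ext₂ fun z w => zero_dvd_iff.mp (hxy ▸ hdvd z w))
  set N := LinearMap.ker (B x) ⊓ LinearMap.ker (B y)
  obtain rfl : n = Module.finrank R N + 2 := by
    obtain ⟨b, -⟩ := exists_basis_of_basis_orthogonal hB hxy hdvd (Module.finBasis R N)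
    rw [← hn, Module.finrank_eq_card_basis b, Fintype.card_fin]
  obtain ⟨c, k, h, hk, hne, hchain, hc⟩ :=
    ih _ (by omega) rfl (B := B.restrict N) (fun u => hB u)
  have hc_apply (i j) : B (c i) (c j) = alternatingBlockDiag _ k h i j := by
    rw [← hc, LinearMap.BilinForm.toMatrix_apply, LinearMap.BilinForm.restrict_apply,
      LinearMap.domRestrict_apply]
  obtain ⟨b, hb₀, hb₁, hbc⟩ := exists_basis_of_basis_orthogonal hB hxy hdvd c
  have hdvd_tail (i : Fin k) : B x y ∣ h i := by
    rw [← alternatingBlockDiag.apply_two_mul h i (m := Module.finrank R N) (by omega), ← hc_apply]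
    exact hdvd _ _
  refine ⟨b, k + 1, Fin.cons (B x y) h, by omega, Fin.cases hxy hne,
    fin_cons_dvd_fin_cons_of_le hdvd_tail hchain, ?_⟩
  have h₀ (i : Fin _) : B (b 0) (b i.succ.succ) = 0 := by rw [hb₀, hbc]; exact (c i).2.1
  have h₁ (i : Fin _) : B (b 1) (b i.succ.succ) = 0 := by rw [hb₁, hbc]; exact (c i).2.2
  have htail (i j : Fin _) :
      B (b i.succ.succ) (b j.succ.succ) = alternatingBlockDiag _ k h i j := by
    rw [hbc, hbc, hc_apply]
  ext i j
  rw [LinearMap.BilinForm.toMatrix_apply, apply_eq_alternatingBlockDiag_cons hB h₀ h₁ htail, hb₀,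
    hb₁]

end PrincipalIdealDomain

theorem isAlt_toBilin' {R n : Type*} [CommRing R] [Fintype n] [DecidableEq n] {P : Matrix n n R}
    (hP : P.transpose = -P) (hdiag : ∀ i, P i i = 0) : (Matrix.toBilin' P).IsAlt := by
  intro x
  have hswap (i j : n) : P j i = -P i j := congrFun₂ hP i j
  rw [Matrix.toBilin'_apply, ← Finset.sum_product']
  refine Finset.sum_involution (fun p _ => p.swap) (fun p _ => ?_) (fun p _ hp hswap_eq => ?_)
    (fun p _ => ?_) fun p _ => ?_
  · simp only [Prod.fst_swap, Prod.snd_swap, hswap p.1 p.2]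
    ring
  · obtain ⟨i, j⟩ := p
    obtain rfl : j = i := congrArg Prod.fst hswap_eq
    exact hp (by simp [hdiag])
  · simp
  · simp

theorem stmt11_general {R : Type*} [CommRing R] [IsDomain R] [IsPrincipalIdealRing R] (r : ℕ)
    (P : Matrix (Fin r) (Fin r) R) (hP : P.transpose = -P) (hdiag : ∀ i, P i i = 0) :
    ∃ (X : Matrix (Fin r) (Fin r) R) (k : ℕ) (h : Fin k → R),
      IsUnit X.det ∧ 2 * k ≤ r ∧ (∀ i, h i ≠ 0) ∧
      (∀ ⦃i j⦄, i ≤ j → h i ∣ h j) ∧ X.transpose * P * X = alternatingBlockDiag r k h := by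
  obtain ⟨b, k, h, hk, hne, hchain, hb⟩ :=
    exists_basis_toMatrix_eq_alternatingBlockDiag (Module.finrank_fin_fun R)
      (isAlt_toBilin' hP hdiag)
  let e := Pi.basisFun R (Fin r)
  have := e.invertibleToMatrix b
  refine ⟨e.toMatrix b, k, h, Matrix.isUnit_det_of_invertible _, hk, hne, hchain, ?_⟩
  rw [← hb, ← LinearMap.BilinForm.toMatrix_mul_basis_toMatrix e b,
    LinearMap.BilinForm.toMatrix_basisFun, LinearMap.BilinForm.toMatrix'_toBilin']

theorem stmt11 (r : ℕ) (P : Matrix (Fin r) (Fin r) ℤ) (hP : P.transpose = -P) :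
    ∃ (X : Matrix (Fin r) (Fin r) ℤ) (k : ℕ) (h : Fin k → ℤ),
      (X.det = 1 ∨ X.det = -1) ∧ 2 * k ≤ r ∧ (∀ i, h i ≠ 0) ∧
      (∀ (i : ℕ) (hi : i + 1 < k), h ⟨i, by omega⟩ ∣ h ⟨i + 1, hi⟩) ∧
      X.transpose * P * X = skewBlockDiag r k h := by
  obtain ⟨X, k, h, hX, hk, hne, hchain, hXP⟩ :=
    stmt11_general r P hP fun i => self_eq_neg.mp (congrFun₂ hP i i)
  exact ⟨X, k, h, Int.isUnit_iff.mp hX, hk, hne, fun i _ => hchain (Nat.le_succ i), hXP⟩
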